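/- arXiv:2407.02332 — 2 statements merged into one kernel-verified Lean document; each statement's English description precedes it below -/
import Mathlib

section
/- For every N ≥ 1 there is a constant C₃ = C₃(N) ≥ 1 such that for every Borel measure μ on ℝ^N and every integer n ≥ 1, λ_CM^n[μ] ≤ λ_V^n[μ] ≤ C₃ λ_CM^n[μ]. -/
open MeasureTheory Filter Metric
open scoped ENNReal NNReal Topology

noncomputable section

/-- Euclidean space `ℝ^N`. -/
abbrev E (N : ℕ) : Type := EuclideanSpace ℝ (Fin N)

/-- The Euclidean heat kernel `H(t,x,y) = (4πt)^{-N/2} exp(-|x-y|²/(4t))`. -/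
def heatKernel (N : ℕ) (t : ℝ) (x y : E N) : ℝ :=
  (4 * Real.pi * t) ^ (-(N : ℝ) / 2) * Real.exp (-‖x - y‖ ^ 2 / (4 * t))

/-- The heat flow `(H_t u₀)(x) = ∫ u₀(y) H(t,x,y) dy`, with `H_0 u₀ = u₀`. -/
def heatFlow (N : ℕ) (u₀ : E N → ℝ) (t : ℝ) (x : E N) : ℝ :=
  if t = 0 then u₀ x else ∫ y, u₀ y * heatKernel N t x y

/-- `VT N T u` means `u ∈ 𝒱𝒯₁⁺(T)`: `u` is `C²`, in `L¹`, positive, of unit mass, and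
`2T·Hess(log u)(x)(v,v) + |v|² ≥ 0` for all `x, v`. -/
def VT (N : ℕ) (T : ℝ) (u : E N → ℝ) : Prop :=
  ContDiff ℝ 2 u ∧ Integrable u volume ∧ (∀ x, 0 < u x) ∧ (∫ x, u x) = 1 ∧
    ∀ x v : E N,
      0 ≤ 2 * T * iteratedFDeriv ℝ 2 (fun y => Real.log (u y)) x ![v, v] + ‖v‖ ^ 2

/-- The Colding–Minicozzi entropy `λ_CM^n[μ]`. -/
def lamCM {N : ℕ} (n : ℕ) (μ : Measure (E N)) : ℝ≥0∞ :=
  ⨆ (ρ : ℝ) (_ : 0 < ρ) (x₀ : E N),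
    ENNReal.ofReal ((4 * Real.pi * ρ) ^ (-(n : ℝ) / 2)) *
      ∫⁻ x, ENNReal.ofReal (Real.exp (-‖x - x₀‖ ^ 2 / (4 * ρ))) ∂μ

/-- The virtual entropy `λ_V^n[μ]`. -/
def lamV {N : ℕ} (n : ℕ) (μ : Measure (E N)) : ℝ≥0∞ :=
  ⨆ (T : ℝ) (_ : 0 < T) (u : E N → ℝ) (_ : VT N T u),
    ENNReal.ofReal ((4 * Real.pi * T) ^ (((N : ℝ) - n) / 2)) *
      ∫⁻ x, ENNReal.ofReal (u x) ∂μ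

/-- The Li–Yau weight `W^M_ρ`, expressed as a function of the squared norm `r2 = |x|²`:
`W^M_ρ(x) = ρ^M (1 + ρ²|x|²/4)^{-M}`. -/
def W (M : ℕ) (ρ r2 : ℝ) : ℝ := ρ ^ M / (1 + ρ ^ 2 * r2 / 4) ^ M

/-- The Li–Yau conformal volume `λ_LY^k[μ]`. -/
def lamLY {N : ℕ} (k : ℕ) (μ : Measure (E N)) : ℝ≥0∞ :=
  ⨆ (ρ : ℝ) (_ : 0 < ρ) (x₀ : E N), ∫⁻ x, ENNReal.ofReal (W k ρ (‖x - x₀‖ ^ 2)) ∂μ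

/-- The `k`-dimensional volume `|𝕊^k|` of the unit `k`-sphere, as the `k`-dimensional
Hausdorff measure of the unit sphere in `ℝ^{k+1}`. -/
def sphereVol (k : ℕ) : ℝ :=
  (μH[(k : ℝ)] (Metric.sphere (0 : EuclideanSpace ℝ (Fin (k + 1))) 1)).toReal

/-- The normalized Li–Yau conformal volume `λ̄_LY^k[μ] = |𝕊^k|⁻¹ λ_LY^k[μ]`. -/
def lamLYbar {N : ℕ} (k : ℕ) (μ : Measure (E N)) : ℝ≥0∞ :=
  ENNReal.ofReal ((sphereVol k)⁻¹) * lamLY k μ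

/-- The Li–Yau conformal volume `λ_LY^k[μ ⊗ L^{2m}]` of the product of `μ` with Lebesgue
measure on `ℝ^{2m}` (the squared Euclidean norm on `ℝ^{N+2m}` of `(y,z)-(y₀,z₀)` is
`|y-y₀|² + |z-z₀|²`). -/
def lamLYProd {N : ℕ} (k : ℕ) (μ : Measure (E N)) (m : ℕ) : ℝ≥0∞ :=
  ⨆ (ρ : ℝ) (_ : 0 < ρ) (y₀ : E N) (z₀ : E (2 * m)),
    ∫⁻ p : E N × E (2 * m),
      ENNReal.ofReal (W k ρ (‖p.1 - y₀‖ ^ 2 + ‖p.2 - z₀‖ ^ 2)) ∂(μ.prod volume)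

/-- The normalized Li–Yau conformal volume `λ̄_LY^k[μ ⊗ L^{2m}]`. -/
def lamLYbarProd {N : ℕ} (k : ℕ) (μ : Measure (E N)) (m : ℕ) : ℝ≥0∞ :=
  ENNReal.ofReal ((sphereVol k)⁻¹) * lamLYProd k μ m

/-- The constant `C_{M,m} = (4π)^m (M+m-1)!/(M+2m-1)!`. -/
def Cconst (M m : ℕ) : ℝ :=
  (4 * Real.pi) ^ m * (Nat.factorial (M + m - 1) : ℝ) / (Nat.factorial (M + 2 * m - 1) : ℝ)

/-- The modified weight `Ŵ^n_{M,ρ}(x) = (4πρ)^{-n/2} (1 + |x|²/(4Mρ))^{-M}`, as a function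
of the squared norm `r2 = |x|²`. -/
def What (n M : ℕ) (ρ r2 : ℝ) : ℝ :=
  (4 * Real.pi * ρ) ^ (-(n : ℝ) / 2) / (1 + r2 / (4 * (M : ℝ) * ρ)) ^ M

/-- The constant `Ĉ_{n,m} = (4π/(n+m))^{n/2} |𝕊^{n+2m}|⁻¹ C_{n,m}`. -/
def Chat (n m : ℕ) : ℝ :=
  (4 * Real.pi / ((n : ℝ) + m)) ^ ((n : ℝ) / 2) * (sphereVol (n + 2 * m))⁻¹ * Cconst n m

open Real in
theorem gauss_lint (N : ℕ) {b : ℝ} (hb : 0 < b) :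
    ∫⁻ z : E N, ENNReal.ofReal (Real.exp (-b * ‖z‖ ^ 2)) =
      ENNReal.ofReal ((Real.pi / b) ^ ((N : ℝ) / 2)) := by
  have h := GaussianFourier.integral_rexp_neg_mul_sq_norm (V := E N) hb
  have hpos : 0 < (Real.pi / b) ^ ((Module.finrank ℝ (E N) : ℝ) / 2) := by positivity
  have hi : Integrable (fun z : E N => Real.exp (-b * ‖z‖ ^ 2)) := by
    by_contra hc
    rw [integral_undef hc] at h
    linarith
  rw [← ofReal_integral_eq_lintegral_ofReal hi (ae_of_all _ fun z => (Real.exp_pos _).le), h]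
  simp

theorem gauss_log_hess (N : ℕ) (c a : ℝ) (x₀ x v : E N) :
    iteratedFDeriv ℝ 2 (fun y : E N => c - a * ‖y - x₀‖ ^ 2) x ![v, v] = - (2 * a * ‖v‖ ^ 2) := by
  have h1 : fderiv ℝ (fun y : E N => c - a * ‖y - x₀‖ ^ 2) =
      fun y => (-(2 * a)) • innerSL ℝ (y - x₀) := by
    funext y
    have h0 : HasFDerivAt (fun y : E N => y - x₀) (ContinuousLinearMap.id ℝ (E N)) y :=
      (hasFDerivAt_id y).sub_const x₀
    have h2 := ((h0.norm_sq).const_mul a).const_sub c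
    rw [h2.fderiv]
    ext w
    simp
    ring
  rw [iteratedFDeriv_two_apply, h1]
  have h3 : HasFDerivAt (fun y : E N => (-(2 * a)) • innerSL ℝ (y - x₀))
      ((-(2 * a)) • (innerSL ℝ : E N →L[ℝ] E N →L[ℝ] ℝ)) x := by
    have h0 : HasFDerivAt (fun y : E N => y - x₀) (ContinuousLinearMap.id ℝ (E N)) x :=
      (hasFDerivAt_id x).sub_const x₀
    have := ((innerSL ℝ : E N →L[ℝ] E N →L[ℝ] ℝ).hasFDerivAt.comp x h0).const_smul (-(2 * a))
    exact this
  rw [h3.fderiv]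
  have e : (innerSL ℝ v) v = ‖v‖ ^ 2 := real_inner_self_eq_norm_sq v
  simp [e]

theorem gauss_VT (N : ℕ) {T : ℝ} (hT : 0 < T) (x₀ : E N) :
    VT N T (fun x => (4 * Real.pi * T) ^ (-(N : ℝ) / 2) * Real.exp (-‖x - x₀‖ ^ 2 / (4 * T))) := by
  have hA : 0 < 4 * Real.pi * T := by positivity
  have hc : 0 < (4 * Real.pi * T) ^ (-(N : ℝ) / 2) := by positivity
  have hfun : (fun x : E N => Real.exp (-‖x - x₀‖ ^ 2 / (4 * T))) =
      fun x => (fun z : E N => Real.exp (-(1 / (4 * T)) * ‖z‖ ^ 2)) (x - x₀) := by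
    funext x; simp only; congr 1; ring
  have h := GaussianFourier.integral_rexp_neg_mul_sq_norm (V := E N)
    (show 0 < 1 / (4 * T) by positivity)
  have hpos : 0 < (Real.pi / (1 / (4 * T))) ^ ((Module.finrank ℝ (E N) : ℝ) / 2) := by positivity
  have hi : Integrable (fun z : E N => Real.exp (-(1 / (4 * T)) * ‖z‖ ^ 2)) := by
    by_contra hc
    rw [integral_undef hc] at h
    linarith
  refine ⟨?_, ?_, ?_, ?_, ?_⟩
  · have : ContDiff ℝ 2 (fun x : E N => ‖x - x₀‖ ^ 2) :=
      (contDiff_id.sub contDiff_const).norm_sq ℝ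
    exact contDiff_const.mul (((this.neg).div_const _).exp)
  · rw [show (fun x : E N => (4 * Real.pi * T) ^ (-(N : ℝ) / 2) *
      Real.exp (-‖x - x₀‖ ^ 2 / (4 * T))) = fun x => (4 * Real.pi * T) ^ (-(N : ℝ) / 2) *
        (fun x : E N => Real.exp (-‖x - x₀‖ ^ 2 / (4 * T))) x from rfl, hfun]
    exact (hi.comp_sub_right x₀).const_mul _
  · intro x; positivity
  · rw [integral_const_mul, hfun, integral_sub_right_eq_self
      (fun z : E N => Real.exp (-(1 / (4 * T)) * ‖z‖ ^ 2)) x₀, h]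
    have : Real.pi / (1 / (4 * T)) = 4 * Real.pi * T := by field_simp
    rw [this, ← Real.rpow_add hA]
    simp
    ring_nf
    simp
  · intro x v
    have : (fun y : E N => Real.log ((4 * Real.pi * T) ^ (-(N : ℝ) / 2) *
        Real.exp (-‖y - x₀‖ ^ 2 / (4 * T)))) =
        fun y => Real.log ((4 * Real.pi * T) ^ (-(N : ℝ) / 2)) - (1 / (4 * T)) * ‖y - x₀‖ ^ 2 := by
      funext y
      rw [Real.log_mul hc.ne' (Real.exp_pos _).ne', Real.log_exp]
      ring
    rw [this, gauss_log_hess]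
    apply le_of_eq
    field_simp
    ring

theorem mid_log (N : ℕ) {T : ℝ} (hT : 0 < T) (h : E N → ℝ) (hh : ContDiff ℝ 2 h)
    (hess : ∀ x v : E N, 0 ≤ 2 * T * iteratedFDeriv ℝ 2 h x ![v, v] + ‖v‖ ^ 2) (x z : E N) :
    2 * h x - ‖z‖ ^ 2 / (2 * T) ≤ h (x + z) + h (x - z) := by
  set a : ℝ := ‖z‖ ^ 2 / (4 * T) with ha
  have hd : Differentiable ℝ h := hh.differentiable (by norm_num)
  have hd2 : Differentiable ℝ (fderiv ℝ h) :=
    (hh.fderiv_right (m := 1) (by norm_num)).differentiable (by norm_num)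
  have hl : ∀ t : ℝ, HasDerivAt (fun t : ℝ => x + t • z) z t := fun t => by
    simpa using ((hasDerivAt_id t).smul_const z).const_add x
  have hq : ∀ t : ℝ, HasDerivAt (fun t : ℝ => a * t ^ 2) (2 * a * t) t := fun t => by
    have := (hasDerivAt_pow 2 t).const_mul a
    have e : a * (((2 : ℕ) : ℝ) * t ^ (2 - 1)) = 2 * a * t := by norm_num; ring
    rw [e] at this
    exact this
  have h1 : ∀ t : ℝ, HasDerivAt (fun t : ℝ => h (x + t • z) + a * t ^ 2)
      (fderiv ℝ h (x + t • z) z + 2 * a * t) t := fun t =>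
    ((hd (x + t • z)).hasFDerivAt.comp_hasDerivAt t (hl t)).add (hq t)
  have h2 : ∀ t : ℝ, HasDerivAt (fun t : ℝ => fderiv ℝ h (x + t • z) z + 2 * a * t)
      (fderiv ℝ (fderiv ℝ h) (x + t • z) z z + 2 * a) t := fun t => by
    have e0 : HasDerivAt (fun t : ℝ => fderiv ℝ h (x + t • z))
        (fderiv ℝ (fderiv ℝ h) (x + t • z) z) t :=
      (hd2 (x + t • z)).hasFDerivAt.comp_hasDerivAt t (hl t)
    have e1 : HasDerivAt (fun t : ℝ => fderiv ℝ h (x + t • z) z)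
        (fderiv ℝ (fderiv ℝ h) (x + t • z) z z) t := by
      have := e0.clm_apply (hasDerivAt_const t z)
      rw [map_zero, add_zero] at this
      exact this
    have e2 : HasDerivAt (fun t : ℝ => 2 * a * t) (2 * a) t := by
      have := (hasDerivAt_id t).const_mul (2 * a)
      rw [mul_one] at this
      exact this
    exact e1.add e2
  have hder : deriv (fun t : ℝ => h (x + t • z) + a * t ^ 2) =
      fun t => fderiv ℝ h (x + t • z) z + 2 * a * t := funext fun t => (h1 t).deriv
  have hconv := convexOn_univ_of_deriv2_nonneg (f := fun t : ℝ => h (x + t • z) + a * t ^ 2)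
    (fun t => (h1 t).differentiableAt) (by rw [hder]; exact fun t => (h2 t).differentiableAt)
    (by
      intro t
      simp only [Function.iterate_succ, Function.iterate_zero, Function.comp_apply, id]
      rw [hder, (h2 t).deriv]
      have := hess (x + t • z) z
      rw [iteratedFDeriv_two_apply] at this
      simp only [Matrix.cons_val_zero, Matrix.cons_val_one] at this
      have e : fderiv ℝ (fderiv ℝ h) (x + t • z) z z + 2 * a =
        (2 * T * fderiv ℝ (fderiv ℝ h) (x + t • z) z z + ‖z‖ ^ 2) / (2 * T) := by
        rw [ha]; field_simp; ring
      rw [e]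
      positivity)
  have := hconv.2 (Set.mem_univ (1:ℝ)) (Set.mem_univ (-1:ℝ)) (show (0:ℝ) ≤ 1/2 by norm_num)
    (show (0:ℝ) ≤ 1/2 by norm_num) (by norm_num)
  norm_num at this
  have e : ‖z‖ ^ 2 / (2 * T) = 2 * a := by rw [ha]; field_simp; ring
  rw [e]
  rw [sub_eq_add_neg x z]
  linarith

theorem mid_u (N : ℕ) {T : ℝ} (hT : 0 < T) (u : E N → ℝ) (hu : VT N T u) (x z : E N) :
    2 * (u x * Real.exp (-(1 / (4 * T)) * ‖z‖ ^ 2)) ≤ u (x + z) + u (x - z) := by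
  obtain ⟨hC, -, hp, -, hess⟩ := hu
  have := mid_log N hT (fun y => Real.log (u y)) (hC.log fun y => (hp y).ne') hess x z
  set p := Real.log (u (x + z)) with hpdef
  set q := Real.log (u (x - z)) with hqdef
  have e1 : u (x + z) = Real.exp (p / 2) ^ 2 := by
    rw [← Real.exp_nat_mul, ← Real.exp_log (hp (x + z))]; congr 1; push_cast; ring
  have e2 : u (x - z) = Real.exp (q / 2) ^ 2 := by
    rw [← Real.exp_nat_mul, ← Real.exp_log (hp (x - z))]; congr 1; push_cast; ring
  have e3 : u x * Real.exp (-(1 / (4 * T)) * ‖z‖ ^ 2) ≤ Real.exp (p / 2) * Real.exp (q / 2) := by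
    rw [← Real.exp_log (hp x), ← Real.exp_add, ← Real.exp_add]
    apply Real.exp_le_exp.2
    have e : ‖z‖ ^ 2 / (2 * T) = 2 * ((1 / (4 * T)) * ‖z‖ ^ 2) := by field_simp; ring
    rw [e] at this
    linarith
  rw [e1, e2]
  nlinarith [sq_nonneg (Real.exp (p / 2) - Real.exp (q / 2))]

theorem mean_u (N : ℕ) {T : ℝ} (hT : 0 < T) (u : E N → ℝ) (hu : VT N T u) (x : E N) :
    ENNReal.ofReal (u x) * ENNReal.ofReal ((2 * Real.pi * T) ^ ((N : ℝ) / 2)) ≤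
      ∫⁻ y, ENNReal.ofReal (u y) * ENNReal.ofReal (Real.exp (-‖x - y‖ ^ 2 / (4 * T))) := by
  have hp := hu.2.2.1
  have hcont : Continuous u := hu.1.continuous
  set G : E N → ℝ≥0∞ := fun z => ENNReal.ofReal (Real.exp (-(1 / (4 * T)) * ‖z‖ ^ 2)) with hG
  have hGm : Measurable G := by
    apply Measurable.ennreal_ofReal; fun_prop
  have hum : Measurable u := hcont.measurable
  have hR : ∀ y : E N, ENNReal.ofReal (Real.exp (-‖x - y‖ ^ 2 / (4 * T))) = G (x - y) := by
    intro y; rw [hG]; simp only; congr 2; ring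
  have hGn : ∀ z, G (-z) = G z := by intro z; simp [hG]
  have A : ∫⁻ z, ENNReal.ofReal (u (x - z)) * G z =
      ∫⁻ y, ENNReal.ofReal (u y) * G (x - y) := by
    rw [← lintegral_sub_left_eq_self (fun y => ENNReal.ofReal (u y) * G (x - y)) x]
    simp
  have B : ∫⁻ z, ENNReal.ofReal (u (x + z)) * G z =
      ∫⁻ y, ENNReal.ofReal (u y) * G (x - y) := by
    rw [← lintegral_add_left_eq_self (fun y => ENNReal.ofReal (u y) * G (x - y)) x]
    simp [hGn]
  simp_rw [hR]
  have C : 2 * (ENNReal.ofReal (u x) * ENNReal.ofReal ((2 * Real.pi * T) ^ ((N : ℝ) / 2))) ≤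
      2 * ∫⁻ y, ENNReal.ofReal (u y) * G (x - y) := by
    calc _ = ∫⁻ z : E N, 2 * (ENNReal.ofReal (u x) *
            ENNReal.ofReal (Real.exp (-(1 / (2 * T)) * ‖z‖ ^ 2))) := by
          rw [lintegral_const_mul, lintegral_const_mul, gauss_lint N (by positivity)]
          · congr 4; field_simp
          · apply Measurable.ennreal_ofReal; fun_prop
          · apply Measurable.const_mul; apply Measurable.ennreal_ofReal; fun_prop
      _ ≤ ∫⁻ z, (ENNReal.ofReal (u (x + z)) * G z + ENNReal.ofReal (u (x - z)) * G z) := by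
          apply lintegral_mono
          intro z
          simp only [hG]
          have h2 : ∀ w : ℝ, (2 : ℝ≥0∞) * ENNReal.ofReal w = ENNReal.ofReal (2 * w) := by
            intro w
            rw [ENNReal.ofReal_mul (by norm_num)]; simp
          rw [← add_mul, ← ENNReal.ofReal_add (hp _).le (hp _).le,
            ← ENNReal.ofReal_mul (hp _).le, h2,
            ← ENNReal.ofReal_mul (by have := hp (x+z); have := hp (x-z); linarith)]
          apply ENNReal.ofReal_le_ofReal
          have e : Real.exp (-(1 / (2 * T)) * ‖z‖ ^ 2) =
              Real.exp (-(1 / (4 * T)) * ‖z‖ ^ 2) * Real.exp (-(1 / (4 * T)) * ‖z‖ ^ 2) := by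
            rw [← Real.exp_add]; congr 1; field_simp; ring
          rw [e]
          have := mul_le_mul_of_nonneg_right (mid_u N hT u hu x z)
            (Real.exp_pos (-(1 / (4 * T)) * ‖z‖ ^ 2)).le
          linarith
      _ = _ := by
          rw [lintegral_add_left, A, B, two_mul]
          exact ((hum.comp (measurable_const.add measurable_id)).ennreal_ofReal).mul hGm
  exact (ENNReal.mul_le_mul_iff_right (by simp) (by simp)).1 C

theorem sfin (N n : ℕ) (μ : Measure (E N)) (h : lamCM n μ ≠ ⊤) : SFinite μ := by
  have key : ∀ x₀ : E N, μ (Metric.ball x₀ 1) < ⊤ := by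
    intro x₀
    have h1 : ENNReal.ofReal ((4 * Real.pi * 1) ^ (-(n : ℝ) / 2)) *
      ∫⁻ x, ENNReal.ofReal (Real.exp (-‖x - x₀‖ ^ 2 / (4 * 1))) ∂μ ≤ lamCM n μ :=
      le_iSup₂_of_le (1:ℝ) one_pos (le_iSup_of_le x₀ le_rfl)
    have hc : ENNReal.ofReal ((4 * Real.pi * 1) ^ (-(n : ℝ) / 2)) ≠ 0 := by
      rw [Ne, ENNReal.ofReal_eq_zero, not_le]; positivity
    have h2 : ∫⁻ x, ENNReal.ofReal (Real.exp (-‖x - x₀‖ ^ 2 / (4 * 1))) ∂μ ≠ ⊤ := by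
      intro ht
      rw [ht, ENNReal.mul_top hc] at h1
      exact h (top_le_iff.1 h1)
    have hm : Measurable fun x : E N => ENNReal.ofReal (Real.exp (-‖x - x₀‖ ^ 2 / (4 * 1))) := by
      apply Measurable.ennreal_ofReal; fun_prop
    have h3 := meas_ge_le_lintegral_div hm.aemeasurable
      (ε := ENNReal.ofReal (Real.exp (-1 / (4 * 1)))) (μ := μ)
      (by rw [Ne, ENNReal.ofReal_eq_zero, not_le]; positivity) (by simp)
    refine (measure_mono ?_).trans_lt (h3.trans_lt (ENNReal.div_lt_top h2 ?_))
    · intro y hy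
      rw [Metric.mem_ball, dist_eq_norm] at hy
      simp only [Set.mem_ofPred_eq]
      apply ENNReal.ofReal_le_ofReal
      apply Real.exp_le_exp.2
      have : ‖y - x₀‖ ^ 2 ≤ 1 := by nlinarith [norm_nonneg (y - x₀)]
      linarith
    · rw [Ne, ENNReal.ofReal_eq_zero, not_le]; positivity
  haveI : IsLocallyFiniteMeasure μ :=
    ⟨fun x => ⟨Metric.ball x 1, Metric.ball_mem_nhds x one_pos, key x⟩⟩
  infer_instance

theorem upper (N n : ℕ) (μ : Measure (E N)) [SFinite μ] {T : ℝ} (hT : 0 < T) (u : E N → ℝ)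
    (hu : VT N T u) :
    ENNReal.ofReal ((4 * Real.pi * T) ^ (((N : ℝ) - n) / 2)) * ∫⁻ x, ENNReal.ofReal (u x) ∂μ ≤
      ENNReal.ofReal (2 ^ ((N : ℝ) / 2)) * lamCM n μ := by
  have hum : Measurable u := hu.1.continuous.measurable
  have hA : 0 < 4 * Real.pi * T := by positivity
  set K := ENNReal.ofReal ((4 * Real.pi * T) ^ (-(n : ℝ) / 2)) with hK
  set I := ENNReal.ofReal ((2 * Real.pi * T) ^ ((N : ℝ) / 2)) with hI
  have hc : ENNReal.ofReal ((4 * Real.pi * T) ^ (((N : ℝ) - n) / 2)) =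
      ENNReal.ofReal (2 ^ ((N : ℝ) / 2)) * (K * I) := by
    rw [hK, hI, ← ENNReal.ofReal_mul (by positivity), ← ENNReal.ofReal_mul (by positivity)]
    congr 1
    rw [show ((N : ℝ) - n) / 2 = -(n : ℝ) / 2 + (N : ℝ) / 2 by ring, Real.rpow_add hA,
      show 4 * Real.pi * T = 2 * (2 * Real.pi * T) by ring,
      Real.mul_rpow (z := (N : ℝ) / 2) (by norm_num) (by positivity)]
    ring
  have hgm : Measurable (fun p : E N × E N =>
      ENNReal.ofReal (Real.exp (-‖p.1 - p.2‖ ^ 2 / (4 * T)))) := by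
    apply Measurable.ennreal_ofReal; fun_prop
  have h1 : (∫⁻ x, ENNReal.ofReal (u x) ∂μ) * I ≤
      ∫⁻ y, ENNReal.ofReal (u y) * ∫⁻ x, ENNReal.ofReal (Real.exp (-‖x - y‖ ^ 2 / (4 * T))) ∂μ := by
    rw [← lintegral_mul_const _ hum.ennreal_ofReal]
    refine (lintegral_mono fun x => mean_u N hT u hu x).trans (le_of_eq ?_)
    have hm2 : Measurable (fun p : E N × E N => ENNReal.ofReal (u p.2) *
        ENNReal.ofReal (Real.exp (-‖p.1 - p.2‖ ^ 2 / (4 * T)))) :=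
      ((hum.comp measurable_snd).ennreal_ofReal).mul hgm
    refine (lintegral_lintegral_swap (μ := μ) (ν := volume) (f := fun x y : E N =>
      ENNReal.ofReal (u y) * ENNReal.ofReal (Real.exp (-‖x - y‖ ^ 2 / (4 * T))))
      hm2.aemeasurable).trans ?_
    refine lintegral_congr fun y => ?_
    have hm3 : Measurable (fun x : E N => ENNReal.ofReal (Real.exp (-‖x - y‖ ^ 2 / (4 * T)))) := by
      apply Measurable.ennreal_ofReal; fun_prop
    exact lintegral_const_mul _ hm3
  have h2 : ∫⁻ y, ENNReal.ofReal (u y) = 1 := by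
    rw [← ofReal_integral_eq_lintegral_ofReal hu.2.1 (ae_of_all _ fun z => (hu.2.2.1 z).le),
      hu.2.2.2.1]
    simp
  rw [hc, mul_assoc]
  gcongr
  calc K * I * ∫⁻ x, ENNReal.ofReal (u x) ∂μ = K * ((∫⁻ x, ENNReal.ofReal (u x) ∂μ) * I) := by ring
    _ ≤ K * ∫⁻ y, ENNReal.ofReal (u y) *
        ∫⁻ x, ENNReal.ofReal (Real.exp (-‖x - y‖ ^ 2 / (4 * T))) ∂μ := by gcongr
    _ = ∫⁻ y, K * (ENNReal.ofReal (u y) *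
        ∫⁻ x, ENNReal.ofReal (Real.exp (-‖x - y‖ ^ 2 / (4 * T))) ∂μ) := by
        rw [lintegral_const_mul' _ _ ENNReal.ofReal_ne_top]
    _ ≤ ∫⁻ y, ENNReal.ofReal (u y) * lamCM n μ := by
        refine lintegral_mono fun y => ?_
        rw [mul_left_comm]
        refine mul_le_mul_right ?_ _
        exact le_iSup₂_of_le T hT (le_iSup_of_le y le_rfl)
    _ = lamCM n μ := by
        rw [lintegral_mul_const _ hum.ennreal_ofReal, h2, one_mul]

theorem lower (N n : ℕ) (μ : Measure (E N)) : lamCM n μ ≤ lamV n μ := by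
  refine iSup₂_le fun ρ hρ => iSup_le fun x₀ => ?_
  refine le_trans (le_of_eq ?_) (le_iSup₂_of_le ρ hρ (le_iSup₂_of_le _ (gauss_VT N hρ x₀) le_rfl))
  have hA : 0 < 4 * Real.pi * ρ := by positivity
  simp_rw [ENNReal.ofReal_mul (show 0 ≤ (4 * Real.pi * ρ) ^ (-(N : ℝ) / 2) by positivity)]
  rw [lintegral_const_mul' _ _ ENNReal.ofReal_ne_top, ← mul_assoc,
    ← ENNReal.ofReal_mul (by positivity), ← Real.rpow_add hA]
  congr 3
  ring

/-- there is `C₃ = C₃(N) ≥ 1` so that `λ_CM^n[μ] ≤ λ_V^n[μ] ≤ C₃ λ_CM^n[μ]`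
for every Borel measure `μ` on `ℝ^N` and every `n ≥ 1`. -/
theorem statement_10 (N : ℕ) (hN : 1 ≤ N) :
    ∃ C₃ : ℝ, 1 ≤ C₃ ∧
      ∀ (μ : Measure (E N)) (n : ℕ), 1 ≤ n →
        lamCM n μ ≤ lamV n μ ∧ lamV n μ ≤ ENNReal.ofReal C₃ * lamCM n μ := by
  refine ⟨2 ^ ((N : ℝ) / 2), Real.one_le_rpow (by norm_num) (by positivity), ?_⟩
  intro μ n _
  refine ⟨lower N n μ, ?_⟩
  by_cases h : lamCM n μ = ⊤
  · rw [h, ENNReal.mul_top]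
    · exact le_top
    · rw [Ne, ENNReal.ofReal_eq_zero, not_le]; positivity
  · haveI := sfin N n μ h
    exact iSup₂_le fun T hT => iSup₂_le fun u hu => upper N n μ hT u hu
end
end

section
/- Let Σ ⊆ ℝ^N be a Borel set, n ≥ 1 an integer, and let Σ' = F(Σ) where F(x) = ρ R x + b for some rotation R ∈ O(N), some ρ > 0 and some b ∈ ℝ^N. Then λ_V^n[ℋ^n⌞Σ'] = λ_V^n[ℋ^n⌞Σ]. -/
open MeasureTheory Filter Metric
open scoped ENNReal NNReal Topology

noncomputable section

lemma aux_VT {N : ℕ} (R : E N ≃ₗᵢ[ℝ] E N) (ρ : ℝ) (hρ : 0 < ρ) (b : E N) (T : ℝ)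
    (u : E N → ℝ) (hu : VT N T u) :
    VT N (T / ρ ^ 2) (fun x => ρ ^ N * u (ρ • R x + b)) := by
  obtain ⟨h1, h2, h3, h4, h5⟩ := hu
  have hmp : MeasurePreserving (R : E N → E N) := R.measurePreserving
  have hN : (0:ℝ) < ρ ^ N := by positivity
  have hib : Integrable (fun x => u (x + b)) volume := h2.comp_add_right b
  have his : Integrable (fun x => u (ρ • x + b)) volume :=
    (integrable_comp_smul_iff volume (fun x => u (x + b)) hρ.ne').2 hib
  have hme : MeasurableEmbedding (R : E N → E N) := R.toHomeomorph.measurableEmbedding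
  refine ⟨?_, ?_, fun x => mul_pos hN (h3 _), ?_, ?_⟩
  · refine contDiff_const.mul (h1.comp ?_)
    exact (R.contDiff.const_smul ρ).add contDiff_const
  · exact ((hmp.integrable_comp_emb hme).2 his).const_mul _
  · rw [integral_const_mul, hmp.integral_comp hme (fun x => u (ρ • x + b)),
      Measure.integral_comp_smul volume (fun x => u (x + b)), integral_add_right_eq_self u b, h4]
    simp [abs_of_pos hρ, hN.ne']
  · intro x v
    set g : E N → ℝ := fun y => Real.log (u y) with hg
    have hgC : ContDiff ℝ 2 g := h1.log (fun x => (h3 x).ne')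
    have hgb : ContDiff ℝ 2 (fun y => g (y + b)) := hgC.comp (contDiff_id.add contDiff_const)
    let L : E N →L[ℝ] E N := ρ • R.toLinearIsometry.toContinuousLinearMap
    have e1 : (fun y => Real.log (ρ ^ N * u (ρ • R y + b))) =
        fun y => Real.log (ρ ^ N) + ((fun y => g (y + b)) ∘ L) y := by
      funext y
      rw [Real.log_mul hN.ne' (h3 _).ne']
      simp [L, hg]
    have hc : ContDiff ℝ 2 ((fun y => g (y + b)) ∘ L) := hgb.comp L.contDiff
    have e2 : iteratedFDeriv ℝ 2 (fun y => Real.log (ρ ^ N * u (ρ • R y + b))) x ![v, v] =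
        ρ ^ 2 * iteratedFDeriv ℝ 2 g (ρ • R x + b) ![R v, R v] := by
      rw [e1, fun_iteratedFDeriv_add_apply contDiffAt_const hc.contDiffAt,
        iteratedFDeriv_const_of_ne (by norm_num),
        L.iteratedFDeriv_comp_right hgb x (i := 2) le_rfl, iteratedFDeriv_comp_add_right]
      have : (fun i => L (![v, v] i)) = fun i => (fun _ => ρ : Fin 2 → ℝ) i • ![R v, R v] i := by
        funext i
        fin_cases i <;> simp [L]
      simp only [Pi.zero_apply, zero_add, ContinuousMultilinearMap.compContinuousLinearMap_apply]
      rw [this, ContinuousMultilinearMap.map_smul_univ]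
      simp [L]
    have := h5 (ρ • R x + b) (R v)
    rw [R.norm_map] at this
    rw [e2]
    have e3 : 2 * (T / ρ ^ 2) * (ρ ^ 2 * iteratedFDeriv ℝ 2 g (ρ • R x + b) ![R v, R v]) =
      2 * T * iteratedFDeriv ℝ 2 g (ρ • R x + b) ![R v, R v] := by
      field_simp
    rw [e3]
    exact this

open scoped Pointwise in
lemma aux_meas {N : ℕ} (n : ℕ) (R : E N ≃ₗᵢ[ℝ] E N) (ρ : ℝ) (hρ : 0 < ρ) (b : E N)
    (A : Set (E N)) :
    μH[(n : ℝ)] ((fun x => ρ • R x + b) '' A) = ENNReal.ofReal (ρ ^ n) * μH[(n : ℝ)] A := by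
  have : (fun x => ρ • R x + b) '' A = (fun x => x + b) '' (ρ • (R '' A)) := by
    rw [← Set.image_smul, Set.image_image, Set.image_image]
  have hi : Isometry (fun x : E N => x + b) := (IsometryEquiv.addRight b).isometry
  rw [this, hi.hausdorffMeasure_image (Or.inl (by positivity)),
    Measure.hausdorffMeasure_smul₀ (by positivity) hρ.ne',
    R.isometry.hausdorffMeasure_image (Or.inl (by positivity))]
  rw [ENNReal.smul_def, smul_eq_mul]
  congr 1
  rw [NNReal.rpow_natCast, ENNReal.ofReal, Real.toNNReal_pow hρ.le]
  congr 2
  ext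
  simp [abs_of_pos hρ, hρ.le]

lemma aux_restrict {N : ℕ} (n : ℕ) (R : E N ≃ₗᵢ[ℝ] E N) (ρ : ℝ) (hρ : 0 < ρ) (b : E N)
    (S : Set (E N)) :
    (μH[(n : ℝ)]).restrict ((fun x => ρ • R x + b) '' S) =
      ENNReal.ofReal (ρ ^ n) • Measure.map (fun x => ρ • R x + b) ((μH[(n : ℝ)]).restrict S) := by
  have hm : Measurable (fun x => ρ • R x + b) :=
    ((R.continuous.const_smul ρ).add continuous_const).measurable
  ext A hA
  rw [Measure.restrict_apply hA, Measure.smul_apply, Measure.map_apply hm hA,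
    Measure.restrict_apply (hm hA), smul_eq_mul, ← aux_meas n R ρ hρ b,
    Set.image_preimage_inter]

lemma aux_le {N : ℕ} (n : ℕ) (S : Set (E N))
    (R : E N ≃ₗᵢ[ℝ] E N) (ρ : ℝ) (hρ : 0 < ρ) (b : E N) :
    lamV n ((μH[(n : ℝ)]).restrict ((fun x => ρ • R x + b) '' S)) ≤
      lamV n ((μH[(n : ℝ)]).restrict S) := by
  have hm : Measurable (fun x => ρ • R x + b) :=
    ((R.continuous.const_smul ρ).add continuous_const).measurable
  rw [aux_restrict n R ρ hρ b]
  refine iSup₂_le fun T hT => iSup₂_le fun u hu => ?_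
  have hum : Measurable (fun x => ENNReal.ofReal (u x)) :=
    ENNReal.measurable_ofReal.comp hu.1.continuous.measurable
  rw [lintegral_smul_measure, lintegral_map hum hm]
  have hT' : 0 < T / ρ ^ 2 := by positivity
  refine le_trans (le_of_eq ?_) (le_iSup₂_of_le (T / ρ ^ 2) hT'
    (le_iSup₂_of_le _ (aux_VT R ρ hρ b T u hu) le_rfl))
  have hN : (0:ℝ) ≤ ρ ^ N := by positivity
  have hum2 : Measurable (fun x => ENNReal.ofReal (u (ρ • R x + b))) := hum.comp hm
  simp only [ENNReal.ofReal_mul hN]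
  rw [lintegral_const_mul _ hum2, smul_eq_mul, ← mul_assoc, ← mul_assoc,
    ← ENNReal.ofReal_mul (by positivity), ← ENNReal.ofReal_mul (by positivity)]
  congr 2
  have e : (4 * Real.pi * (T / ρ ^ 2)) = (4 * Real.pi * T) / ρ ^ 2 := by ring
  rw [e, Real.div_rpow (by positivity) (by positivity), ← Real.rpow_natCast ρ 2,
    ← Real.rpow_mul hρ.le]
  have e' : ((2:ℕ):ℝ) * (((N:ℝ) - n) / 2) = (N:ℝ) - n := by push_cast; ring
  rw [e', Real.rpow_sub hρ, Real.rpow_natCast, Real.rpow_natCast]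
  field_simp

/-- the virtual entropy of `ℋ^n⌞Σ` is invariant under compositions of
rotations `R ∈ O(N)` (linear isometries), dilations `ρ > 0` and translations `b`. -/
theorem statement_11 (N n : ℕ) (hn : 1 ≤ n) (S : Set (E N)) (hS : MeasurableSet S)
    (R : E N ≃ₗᵢ[ℝ] E N) (ρ : ℝ) (hρ : 0 < ρ) (b : E N) :
    lamV n ((μH[(n : ℝ)]).restrict ((fun x => ρ • R x + b) '' S)) =
      lamV n ((μH[(n : ℝ)]).restrict S) := by
  refine le_antisymm (aux_le n S R ρ hρ b) ?_
  have h := aux_le n ((fun x => ρ • R x + b) '' S) R.symm ρ⁻¹ (inv_pos.2 hρ)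
    (-(ρ⁻¹ • R.symm b))
  have e : (fun x => ρ⁻¹ • R.symm x + -(ρ⁻¹ • R.symm b)) '' ((fun x => ρ • R x + b) '' S) = S := by
    rw [Set.image_image]
    convert Set.image_id S using 2
    simp [smul_smul, hρ.ne']
  rwa [e] at h
end
end
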